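/- arXiv:1604.00358 — 6 statements merged into one kernel-verified Lean document; each statement's English description precedes it below -/
import Mathlib

section
/- The class of finite good colored orders has the amalgamation property: for all finite good colored orders A, B, C and embeddings f : A → B and g : A → C, there exist a finite good colored order D and embeddings f' : B → D and g' : C → D such that f' ∘ f = g' ∘ g. -/
/-!
The amalgam lives on `B` together with the points of `C` outside the image of `A`. A point `b` of `B`
lies below a new point `x` of `C` exactly when some point of `A` separates them, i.e. `b ≤ f a` and
`g a < x`; otherwise `x` lies below `b`. This linear order extends both given orders.

All pairs between `B \ A` and `C \ A` get one color `N` that occurs in neither `B` nor `C`, which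
exists by finiteness. A triangle using the color `N` cannot be monochromatic, since the pairs
colored `N` form a bipartite graph; a triangle not using `N` lies entirely in `B` or in `C`.
-/

/-- A colored order structure on a type `X`: a strict linear order `lt` together with a
symmetric coloring `c` of pairs of distinct elements by natural numbers. -/
structure ColOrd (X : Type) where
  lt : X → X → Prop
  c : X → X → ℕ
  lt_irrefl : ∀ a, ¬ lt a a
  lt_trans : ∀ ⦃a b d⦄, lt a b → lt b d → lt a d
  lt_total : ∀ a b, a ≠ b → lt a b ∨ lt b a
  c_symm : ∀ a b, a ≠ b → c a b = c b a

/-- A colored order is *good* if it contains no monochromatic triangle. -/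
def ColOrd.Good {X : Type} (S : ColOrd X) : Prop :=
  ¬ ∃ a b d : X, a ≠ b ∧ b ≠ d ∧ a ≠ d ∧ S.c a b = S.c b d ∧ S.c a b = S.c a d

/-- An embedding of colored orders: a strictly order-preserving injection which
preserves the colors of pairs of distinct elements. -/
def IsEmb {X Y : Type} (S : ColOrd X) (T : ColOrd Y) (f : X → Y) : Prop :=
  Function.Injective f ∧
  (∀ a b, S.lt a b ↔ T.lt (f a) (f b)) ∧
  (∀ a b, a ≠ b → T.c (f a) (f b) = S.c a b)

/-- An automorphism is a surjective self-embedding. -/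
def IsAuto {X : Type} (S : ColOrd X) (α : X → X) : Prop :=
  Function.Surjective α ∧ IsEmb S S α

/-- `B`, a colored order on `Option A` (where `some a` represents the point `a ∈ A` and
`none` represents a new point), extends the structure induced by `S` on `A ⊆ X`. -/
def ExtendsOn {X : Type} (S : ColOrd X) (A : Set X) (B : ColOrd (Option A)) : Prop :=
  (∀ a b : A, B.lt (some a) (some b) ↔ S.lt a b) ∧
  (∀ a b : A, (a : X) ≠ (b : X) → B.c (some a) (some b) = S.c a b)

/-- The one-point extension property: every good one-point extension of (the structure
induced on) a finite subset `A` is realized by some `t ∉ A`, in the sense that the map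
fixing `A` pointwise and sending the new point to `t` is an isomorphism onto `A ∪ {t}`. -/
def OnePointExtProp {X : Type} (S : ColOrd X) : Prop :=
  ∀ A : Set X, A.Finite → ∀ B : ColOrd (Option A), B.Good → ExtendsOn S A B →
    ∃ t : X, t ∉ A ∧
      (∀ a : A, (B.lt (some a) none ↔ S.lt a t) ∧ (B.lt none (some a) ↔ S.lt t a)) ∧
      (∀ a : A, B.c (some a) none = S.c a t ∧ B.c none (some a) = S.c t a)

/-- Ultrahomogeneity: every isomorphism between finite subsets (with the induced
structure) extends to an automorphism. -/
def Ultrahomogeneous {X : Type} (S : ColOrd X) : Prop :=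
  ∀ (A B : Set X), A.Finite → B.Finite → ∀ g : A → B, Function.Bijective g →
    (∀ a b : A, S.lt (g a : X) (g b : X) ↔ S.lt a b) →
    (∀ a b : A, (a : X) ≠ (b : X) → S.c (g a : X) (g b : X) = S.c a b) →
    ∃ α : X → X, IsAuto S α ∧ ∀ a : A, α a = g a

/-- A Fraïssé limit of the class of finite good colored orders: a countably infinite
good colored order which is ultrahomogeneous and has the one-point extension property. -/
def IsFLim {X : Type} (S : ColOrd X) : Prop :=
  Countable X ∧ Infinite X ∧ S.Good ∧ Ultrahomogeneous S ∧ OnePointExtProp S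

/-- Finiteness leaves fresh colors: `N` exceeds every color in use. -/
lemma ColOrd.exists_color_bound {X : Type} [Finite X] (S : ColOrd X) :
    ∃ N, ∀ a b, S.c a b < N := by
  obtain ⟨M, hM⟩ := (Set.finite_range (fun p : X × X => S.c p.1 p.2)).bddAbove
  exact ⟨M + 1, fun a b => Nat.lt_succ_of_le (hM ⟨(a, b), rfl⟩)⟩

/-- The point `b` of `B` lies below the point `x` of `C` in the amalgam: some point of `A`
separates them, possibly being equal to `b`. -/
def amalgBelow {A B C : Type} (SB : ColOrd B) (SC : ColOrd C) (f : A → B) (g : A → C)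
    (b : B) (x : C) : Prop :=
  ∃ a, (b = f a ∨ SB.lt b (f a)) ∧ SC.lt (g a) x

open Classical in
/-- The color of the pair formed by a point `b` of `B` and a point `x` of `C` outside the image
of `A`: the one prescribed by `C` when `b` comes from `A`, and the fresh color `N` otherwise. -/
noncomputable def amalgColor {A B C : Type} (SC : ColOrd C) (f : A → B) (g : A → C) (N : ℕ)
    (b : B) (x : C) : ℕ :=
  if h : ∃ a, f a = b then SC.c (g h.choose) x else N

lemma amalgColor_apply {A B C : Type} (SC : ColOrd C) (f : A → B) (g : A → C) (N : ℕ)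
    (hf : Function.Injective f) (a : A) (x : C) :
    amalgColor SC f g N (f a) x = SC.c (g a) x := by
  have h : ∃ a', f a' = f a := ⟨a, rfl⟩
  rw [amalgColor, dif_pos h, hf h.choose_spec]

lemma amalgColor_of_not_mem {A B C : Type} (SC : ColOrd C) (f : A → B) (g : A → C) (N : ℕ)
    {b : B} (hb : ¬ ∃ a, f a = b) (x : C) : amalgColor SC f g N b x = N :=
  dif_neg hb

/-- For a point of `A`, the separation relation is the order of `C`. -/
lemma amalgBelow_apply {A B C : Type} {SA : ColOrd A} {SB : ColOrd B} {SC : ColOrd C}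
    {f : A → B} {g : A → C} (hf : IsEmb SA SB f) (hg : IsEmb SA SC g) (a : A) (x : C) :
    amalgBelow SB SC f g (f a) x ↔ SC.lt (g a) x := by
  constructor
  · rintro ⟨a', h | h, hx⟩
    · rwa [hf.1 h]
    · exact SC.lt_trans ((hg.2.1 _ _).1 ((hf.2.1 _ _).2 h)) hx
  · exact fun h => ⟨a, Or.inl rfl, h⟩

/-- The amalgam of `B` and `C` over `A`, with `N` as the color of the pairs not determined by `B`
or `C`. -/
noncomputable def amalg {A B C : Type} (SB : ColOrd B) (SC : ColOrd C)
    (f : A → B) (g : A → C) (N : ℕ) : ColOrd (B ⊕ {x : C // ¬ ∃ a, g a = x}) where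
  lt
    | .inl b, .inl b' => SB.lt b b'
    | .inl b, .inr x => amalgBelow SB SC f g b x
    | .inr x, .inl b => ¬ amalgBelow SB SC f g b x
    | .inr x, .inr y => SC.lt x y
  c
    | .inl b, .inl b' => SB.c b b'
    | .inl b, .inr x => amalgColor SC f g N b x
    | .inr x, .inl b => amalgColor SC f g N b x
    | .inr x, .inr y => SC.c x y
  lt_irrefl := by
    rintro (b | x)
    · exact SB.lt_irrefl b
    · exact SC.lt_irrefl x
  lt_trans := by
    -- Decreasing `b` or increasing `x` preserves separation.
    have mono_left : ∀ {b b' : B} {x : C}, SB.lt b b' → amalgBelow SB SC f g b' x →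
        amalgBelow SB SC f g b x := by
      rintro b b' x hb ⟨a, rfl | h, hx⟩
      · exact ⟨a, Or.inr hb, hx⟩
      · exact ⟨a, Or.inr (SB.lt_trans hb h), hx⟩
    have mono_right : ∀ {b : B} {x y : C}, SC.lt x y → amalgBelow SB SC f g b x →
        amalgBelow SB SC f g b y := by
      rintro b x y hy ⟨a, h, hx⟩
      exact ⟨a, h, SC.lt_trans hx hy⟩
    rintro (b | x) (b' | y) (b'' | z) h₁ h₂
    · exact SB.lt_trans h₁ h₂
    · exact mono_left h₁ h₂
    · obtain ⟨a, ha, hy⟩ := h₁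
      have hlt : SB.lt (f a) b'' := by
        by_cases he : b'' = f a
        · exact absurd ⟨a, Or.inl he, hy⟩ h₂
        · exact (SB.lt_total _ _ he).resolve_left fun h => h₂ ⟨a, Or.inr h, hy⟩
      rcases ha with rfl | ha
      · exact hlt
      · exact SB.lt_trans ha hlt
    · exact mono_right h₂ h₁
    · exact fun h => h₁ (mono_left h₂ h)
    · obtain ⟨a, ha, hz⟩ := h₂
      have hlt : SC.lt x (g a) := by
        refine (SC.lt_total _ _ fun he => x.2 ⟨a, he.symm⟩).resolve_right fun h => ?_
        exact h₁ ⟨a, ha, h⟩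
      exact SC.lt_trans hlt hz
    · exact fun h => h₂ (mono_right h₁ h)
    · exact SC.lt_trans h₁ h₂
  lt_total := by
    rintro (b | x) (b' | y) h
    · exact SB.lt_total _ _ fun he => h (he ▸ rfl)
    · exact em _
    · exact (em _).symm
    · exact SC.lt_total _ _ fun he => h (congrArg _ (Subtype.ext he))
  c_symm := by
    rintro (b | x) (b' | y) h
    · exact SB.c_symm _ _ fun he => h (he ▸ rfl)
    · rfl
    · rfl
    · exact SC.c_symm _ _ fun he => h (congrArg _ (Subtype.ext he))

lemma amalg_good {A B C : Type} {SA : ColOrd A} {SB : ColOrd B} {SC : ColOrd C}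
    {f : A → B} {g : A → C} {N : ℕ} (hBg : SB.Good) (hCg : SC.Good)
    (hf : IsEmb SA SB f) (hg : IsEmb SA SC g)
    (hNB : ∀ a b, SB.c a b < N) (hNC : ∀ a b, SC.c a b < N) :
    (amalg SB SC f g N).Good := by
  -- No monochromatic triangle has two vertices in `B` and one in `C` outside the image of `A`.
  have bbc : ∀ (b b' : B) (x : C), (¬ ∃ a, g a = x) → b ≠ b' →
      SB.c b b' = amalgColor SC f g N b x → SB.c b b' = amalgColor SC f g N b' x → False := by
    intro b b' x hx hne h₁ h₂
    by_cases hb : ∃ a, f a = b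
    · by_cases hb' : ∃ a, f a = b'
      · obtain ⟨a, rfl⟩ := hb
        obtain ⟨a', rfl⟩ := hb'
        have haa : a ≠ a' := fun h => hne (h ▸ rfl)
        rw [amalgColor_apply _ _ _ _ hf.1, hf.2.2 _ _ haa, ← hg.2.2 _ _ haa] at h₁ h₂
        exact hCg ⟨g a, g a', x, fun h => haa (hg.1 h), fun h => hx ⟨_, h⟩,
          fun h => hx ⟨_, h⟩, h₂, h₁⟩
      · rw [amalgColor_of_not_mem _ _ _ _ hb'] at h₂
        exact (hNB b b').ne h₂
    · rw [amalgColor_of_not_mem _ _ _ _ hb] at h₁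
      exact (hNB b b').ne h₁
  -- No monochromatic triangle has one vertex in `B` and two in `C` outside the image of `A`.
  have bcc : ∀ (b : B) (x y : C), (¬ ∃ a, g a = x) → (¬ ∃ a, g a = y) → x ≠ y →
      SC.c x y = amalgColor SC f g N b x → SC.c x y = amalgColor SC f g N b y → False := by
    intro b x y hx hy hne h₁ h₂
    by_cases hb : ∃ a, f a = b
    · obtain ⟨a, rfl⟩ := hb
      rw [amalgColor_apply _ _ _ _ hf.1] at h₁ h₂
      exact hCg ⟨g a, x, y, fun h => hx ⟨_, h⟩, hne, fun h => hy ⟨_, h⟩,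
        h₁.symm, h₁.symm.trans h₂⟩
    · rw [amalgColor_of_not_mem _ _ _ _ hb] at h₁
      exact (hNC x y).ne h₁
  rintro ⟨b | x, b' | y, b'' | z, h₁, h₂, h₃, e₁, e₂⟩ <;>
    simp only [amalg, ne_eq, Sum.inl.injEq, Sum.inr.injEq, Subtype.ext_iff] at h₁ h₂ h₃ e₁ e₂
  · exact hBg ⟨b, b', b'', h₁, h₂, h₃, e₁, e₂⟩
  · exact bbc b b' z z.2 h₁ e₂ e₁
  · exact bbc b b'' y y.2 h₃ (e₂.symm) (e₂.symm.trans e₁)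
  · exact bcc b y z y.2 z.2 h₂ e₁.symm (e₁.symm.trans e₂)
  · exact bbc b' b'' x x.2 h₂ e₁.symm (e₁.symm.trans e₂)
  · exact bcc b' x z x.2 z.2 h₃ e₂.symm (e₂.symm.trans e₁)
  · exact bcc b'' x y x.2 y.2 h₁ e₂ e₁
  · exact hCg ⟨x, y, z, h₁, h₂, h₃, e₁, e₂⟩

lemma amalg_isEmb_inl {A B C : Type} (SB : ColOrd B) (SC : ColOrd C)
    (f : A → B) (g : A → C) (N : ℕ) : IsEmb SB (amalg SB SC f g N) Sum.inl :=
  ⟨Sum.inl_injective, fun _ _ => Iff.rfl, fun _ _ _ => rfl⟩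

open Classical in
/-- The map from `C` to the amalgam: points coming from `A` go to their image in `B`. -/
noncomputable def amalgInr {A B C : Type} (f : A → B) (g : A → C) (x : C) :
    B ⊕ {x : C // ¬ ∃ a, g a = x} :=
  if h : ∃ a, g a = x then .inl (f h.choose) else .inr ⟨x, h⟩

lemma amalgInr_apply {A B C : Type} (f : A → B) {g : A → C} (hg : Function.Injective g) (a : A) :
    amalgInr f g (g a) = .inl (f a) := by
  have h : ∃ a', g a' = g a := ⟨a, rfl⟩
  rw [amalgInr, dif_pos h, hg h.choose_spec]

lemma amalgInr_of_not_mem {A B C : Type} (f : A → B) {g : A → C} {x : C}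
    (hx : ¬ ∃ a, g a = x) : amalgInr f g x = .inr ⟨x, hx⟩ :=
  dif_neg hx

lemma amalg_isEmb_amalgInr {A B C : Type} {SA : ColOrd A} {SB : ColOrd B} {SC : ColOrd C}
    {f : A → B} {g : A → C} (N : ℕ) (hf : IsEmb SA SB f) (hg : IsEmb SA SC g) :
    IsEmb SC (amalg SB SC f g N) (amalgInr f g) := by
  refine ⟨fun x y h => ?_, fun x y => ?_, fun x y hne => ?_⟩ <;>
    by_cases hx : ∃ a, g a = x <;> by_cases hy : ∃ a, g a = y
  · obtain ⟨a, rfl⟩ := hx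
    obtain ⟨a', rfl⟩ := hy
    rw [amalgInr_apply f hg.1, amalgInr_apply f hg.1] at h
    rw [hf.1 (Sum.inl_injective h)]
  · obtain ⟨a, rfl⟩ := hx
    rw [amalgInr_apply f hg.1, amalgInr_of_not_mem f hy] at h
    exact absurd h Sum.inl_ne_inr
  · obtain ⟨a, rfl⟩ := hy
    rw [amalgInr_apply f hg.1, amalgInr_of_not_mem f hx] at h
    exact absurd h Sum.inr_ne_inl
  · rw [amalgInr_of_not_mem f hx, amalgInr_of_not_mem f hy] at h
    exact congrArg Subtype.val (Sum.inr_injective h)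
  · obtain ⟨a, rfl⟩ := hx
    obtain ⟨a', rfl⟩ := hy
    rw [amalgInr_apply f hg.1, amalgInr_apply f hg.1]
    exact (hg.2.1 _ _).symm.trans (hf.2.1 _ _)
  · obtain ⟨a, rfl⟩ := hx
    rw [amalgInr_apply f hg.1, amalgInr_of_not_mem f hy]
    exact (amalgBelow_apply hf hg a y).symm
  · obtain ⟨a, rfl⟩ := hy
    rw [amalgInr_apply f hg.1, amalgInr_of_not_mem f hx]
    refine Iff.trans ?_ (not_congr (amalgBelow_apply hf hg a x)).symm
    exact ⟨fun h h' => SC.lt_irrefl _ (SC.lt_trans h h'),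
      (SC.lt_total _ _ fun he => hx ⟨a, he.symm⟩).resolve_right⟩
  · rw [amalgInr_of_not_mem f hx, amalgInr_of_not_mem f hy]
    exact Iff.rfl
  · obtain ⟨a, rfl⟩ := hx
    obtain ⟨a', rfl⟩ := hy
    have haa : a ≠ a' := fun h => hne (h ▸ rfl)
    rw [amalgInr_apply f hg.1, amalgInr_apply f hg.1]
    exact (hf.2.2 _ _ haa).trans (hg.2.2 _ _ haa).symm
  · obtain ⟨a, rfl⟩ := hx
    rw [amalgInr_apply f hg.1, amalgInr_of_not_mem f hy]
    exact amalgColor_apply SC f g N hf.1 a y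
  · obtain ⟨a, rfl⟩ := hy
    rw [amalgInr_apply f hg.1, amalgInr_of_not_mem f hx]
    exact (amalgColor_apply SC f g N hf.1 a x).trans (SC.c_symm _ _ hne.symm)
  · rw [amalgInr_of_not_mem f hx, amalgInr_of_not_mem f hy]
    rfl

/-- The class of finite good colored orders has the amalgamation
property. -/
theorem amalgamation_property
    (A B C : Type) (SA : ColOrd A) (SB : ColOrd B) (SC : ColOrd C)
    (hA : Finite A) (hB : Finite B) (hC : Finite C)
    (hAg : SA.Good) (hBg : SB.Good) (hCg : SC.Good)
    (f : A → B) (g : A → C) (hf : IsEmb SA SB f) (hg : IsEmb SA SC g) :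
    ∃ (D : Type) (SD : ColOrd D) (f' : B → D) (g' : C → D),
      Finite D ∧ SD.Good ∧ IsEmb SB SD f' ∧ IsEmb SC SD g' ∧ f' ∘ f = g' ∘ g := by
  obtain ⟨M, hM⟩ := SB.exists_color_bound
  obtain ⟨K, hK⟩ := SC.exists_color_bound
  refine ⟨_, amalg SB SC f g (max M K), Sum.inl, amalgInr f g, inferInstance, ?_, ?_, ?_, ?_⟩
  · exact amalg_good hBg hCg hf hg (fun a b => lt_max_of_lt_left (hM a b))
      (fun a b => lt_max_of_lt_right (hK a b))
  · exact amalg_isEmb_inl SB SC f g _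
  · exact amalg_isEmb_amalgInr _ hf hg
  · exact funext fun a => (amalgInr_apply f hg.1 a).symm
end

section
/- The class of finite good colored orders has the joint embedding property: for all finite good colored orders A and B, there exist a finite good colored order D and embeddings f : A → D and g : B → D. -/
/-- The ordinal sum of two colored orders, with every cross pair colored `m`. -/
def ColOrd.sum {A B : Type} (SA : ColOrd A) (SB : ColOrd B) (m : ℕ) : ColOrd (A ⊕ B) where
  lt := Sum.Lex SA.lt SB.lt
  c
    | .inl a, .inl b => SA.c a b
    | .inr a, .inr b => SB.c a b
    | _, _ => m
  lt_irrefl := by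
    rintro (a | a) <;> simp [SA.lt_irrefl, SB.lt_irrefl]
  lt_trans := by
    rintro (a | a) (b | b) (d | d) <;> simp
    · exact @SA.lt_trans a b d
    · exact @SB.lt_trans a b d
  lt_total := by
    rintro (a | a) (b | b) h <;> simp
    · exact SA.lt_total a b (by simpa using h)
    · exact SB.lt_total a b (by simpa using h)
  c_symm := by
    rintro (a | a) (b | b) h <;> simp
    · exact SA.c_symm a b (by simpa using h)
    · exact SB.c_symm a b (by simpa using h)

lemma ColOrd.sum_good {A B : Type} {SA : ColOrd A} {SB : ColOrd B} {m : ℕ}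
    (hA : SA.Good) (hB : SB.Good) (hmA : ∀ a b, SA.c a b ≠ m) (hmB : ∀ a b, SB.c a b ≠ m) :
    (SA.sum SB m).Good := by
  rintro ⟨a | a, b | b, d | d, h1, h2, h3, h4, h5⟩ <;> simp [ColOrd.sum] at h1 h2 h3 h4 h5
  · exact hA ⟨a, b, d, h1, h2, h3, h4, h5⟩
  · exact hmA _ _ h4
  · exact hmA _ _ h5.symm
  · exact hmB _ _ h4.symm
  · exact hmA _ _ h4.symm
  · exact hmB _ _ h5.symm
  · exact hmB _ _ h4
  · exact hB ⟨a, b, d, h1, h2, h3, h4, h5⟩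

/-- The class of finite good colored orders has the joint embedding
property. -/
theorem joint_embedding_property
    (A B : Type) (SA : ColOrd A) (SB : ColOrd B)
    (hA : Finite A) (hB : Finite B) (hAg : SA.Good) (hBg : SB.Good) :
    ∃ (D : Type) (SD : ColOrd D) (f : A → D) (g : B → D),
      Finite D ∧ SD.Good ∧ IsEmb SA SD f ∧ IsEmb SB SD g := by
  obtain ⟨m, hm⟩ := ((Set.finite_range fun p : A × A => SA.c p.1 p.2).union
    (Set.finite_range fun p : B × B => SB.c p.1 p.2)).exists_notMem
  have hmA : ∀ a b, SA.c a b ≠ m := fun a b h => hm (.inl ⟨(a, b), h⟩)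
  have hmB : ∀ a b, SB.c a b ≠ m := fun a b h => hm (.inr ⟨(a, b), h⟩)
  exact ⟨A ⊕ B, SA.sum SB m, Sum.inl, Sum.inr, inferInstance,
    ColOrd.sum_good hAg hBg hmA hmB,
    ⟨Sum.inl_injective, fun _ _ => Sum.lex_inl_inl.symm, fun _ _ _ => rfl⟩,
    ⟨Sum.inr_injective, fun _ _ => Sum.lex_inr_inr.symm, fun _ _ _ => rfl⟩⟩
end

section
/- There exists a countably infinite good colored order M which is ultrahomogeneous (every isomorphism between finite subsets of M, with the induced structure, extends to an automorphism of M) and has the one-point extension property: for every finite subset A ⊆ M and every good colored order B = A ∪ {b} extending the induced structure on A by one new point b, there exists t ∈ M \ A such that the map fixing A pointwise and sending b to t is an isomorphism of B onto A ∪ {t}. (That is, the class of finite good colored orders has a Fraïssé limit.) -/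
/-! ### Back-and-forth -/

/-- The pullback of a colored order along an injection. -/
def ColOrd.comap {X Y : Type} (S : ColOrd X) (h : Y → X) (hh : Function.Injective h) :
    ColOrd Y where
  lt a b := S.lt (h a) (h b)
  c a b := S.c (h a) (h b)
  lt_irrefl _ := S.lt_irrefl _
  lt_trans _ _ _ hab hbd := S.lt_trans hab hbd
  lt_total _ _ hab := S.lt_total _ _ (hh.ne hab)
  c_symm _ _ hab := S.c_symm _ _ (hh.ne hab)

lemma ColOrd.Good.comap {X Y : Type} {S : ColOrd X} (hS : S.Good) (h : Y → X)
    (hh : Function.Injective h) : (S.comap h hh).Good := by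
  rintro ⟨a, b, d, hab, hbd, had, h1, h2⟩
  exact hS ⟨h a, h b, h d, hh.ne hab, hh.ne hbd, hh.ne had, h1, h2⟩

/-- Two pairs `p = (x, y)` and `q = (x', y')` are compatible if `x ↦ y, x' ↦ y'` is a well-defined
isomorphism between `{x, x'}` and `{y, y'}`. -/
def Compat {X : Type} (S : ColOrd X) (p q : X × X) : Prop :=
  (p.1 = q.1 ↔ p.2 = q.2) ∧ (S.lt p.1 q.1 ↔ S.lt p.2 q.2) ∧
    (p.1 ≠ q.1 → S.c p.2 q.2 = S.c p.1 q.1)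

/-- A finite set of pairs is (the graph of) a partial isomorphism. -/
def IsPartIso {X : Type} (S : ColOrd X) (f : Finset (X × X)) : Prop :=
  ∀ p ∈ f, ∀ q ∈ f, Compat S p q

lemma Compat.refl {X : Type} (S : ColOrd X) (p : X × X) : Compat S p p :=
  ⟨by simp, by simp [S.lt_irrefl], by simp⟩

lemma Compat.swap {X : Type} {S : ColOrd X} {p q : X × X} (h : Compat S p q) :
    Compat S p.swap q.swap :=
  ⟨h.1.symm, h.2.1.symm, fun hne => (h.2.2 fun e => hne (h.1.1 e)).symm⟩

lemma Compat.symm {X : Type} {S : ColOrd X} {p q : X × X} (h : Compat S p q) :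
    Compat S q p := by
  refine ⟨by rw [eq_comm, h.1, eq_comm], ?_, ?_⟩
  · by_cases e : p.1 = q.1
    · simp [← e, ← h.1.1 e, S.lt_irrefl]
    · have e2 : p.2 ≠ q.2 := fun e' => e (h.1.2 e')
      have key : ∀ a b, a ≠ b → (S.lt b a ↔ ¬ S.lt a b) := fun a b hab =>
        ⟨fun h1 h2 => S.lt_irrefl _ (S.lt_trans h1 h2),
          fun h1 => (S.lt_total a b hab).resolve_left h1⟩
      rw [key _ _ e, key _ _ e2, h.2.1]
  · intro e
    have e2 : p.2 ≠ q.2 := fun e' => e (h.1.2 e').symm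
    rw [← S.c_symm _ _ e2, ← S.c_symm _ _ (Ne.symm e), h.2.2 (Ne.symm e)]

lemma IsPartIso.swap {X : Type} [DecidableEq X] {S : ColOrd X} {f : Finset (X × X)}
    (hf : IsPartIso S f) : IsPartIso S (f.image Prod.swap) := by
  intro p hp q hq
  obtain ⟨p', hp', rfl⟩ := Finset.mem_image.1 hp
  obtain ⟨q', hq', rfl⟩ := Finset.mem_image.1 hq
  exact (hf p' hp' q' hq').swap

/-- The "forth" step: the type of `x` over the domain of `f`, transported to the range of `f`, is
a good one-point extension of that range, so it is realized. -/
lemma IsPartIso.exists_extend {X : Type} [DecidableEq X] {S : ColOrd X} (hS : S.Good)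
    (hE : OnePointExtProp S) {f : Finset (X × X)} (hf : IsPartIso S f) (x : X) :
    ∃ y, IsPartIso S (insert (x, y) f) := by
  by_cases hx : ∃ y, (x, y) ∈ f
  · obtain ⟨y, hy⟩ := hx
    exact ⟨y, by rwa [Finset.insert_eq_of_mem hy]⟩
  let A : Set X := {y | ∃ z, (z, y) ∈ f}
  have hA : A.Finite := by
    refine (f.image Prod.snd).finite_toSet.subset ?_
    rintro y ⟨z, hz⟩
    exact Finset.mem_coe.2 (Finset.mem_image.2 ⟨_, hz, rfl⟩)
  choose k hk using fun a : A => a.2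
  let h : Option A → X := fun o => o.elim x k
  have hh : Function.Injective h := by
    rintro (_ | a) (_ | b) hab
    · rfl
    · exact absurd ⟨_, (show x = k b from hab) ▸ hk b⟩ hx
    · exact absurd ⟨_, (show k a = x from hab) ▸ hk a⟩ hx
    · exact congrArg some (Subtype.ext ((hf _ (hk a) _ (hk b)).1.1 hab))
  obtain ⟨t, htA, hlt, hc⟩ := hE A hA (S.comap h hh) (hS.comap h hh)
    ⟨fun a b => (hf _ (hk a) _ (hk b)).2.1, fun a b hab =>
      ((hf _ (hk a) _ (hk b)).2.2 fun e => hab ((hf _ (hk a) _ (hk b)).1.1 e)).symm⟩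
  have key : ∀ p ∈ f, Compat S p (x, t) := by
    rintro ⟨z, y⟩ hp
    have hy : y ∈ A := ⟨z, hp⟩
    have hz : k ⟨y, hy⟩ = z := (hf _ (hk ⟨y, hy⟩) _ hp).1.2 rfl
    have h1 := (hlt ⟨y, hy⟩).1
    have h2 := (hc ⟨y, hy⟩).1
    simp only [ColOrd.comap, h, Option.elim, hz] at h1 h2
    refine ⟨⟨fun e => ?_, fun e => ?_⟩, h1, fun _ => h2.symm⟩
    · exact absurd ⟨_, (show z = x from e) ▸ hp⟩ hx
    · exact absurd ((show y = t from e) ▸ hy) htA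
  refine ⟨t, ?_⟩
  intro p hp q hq
  rcases Finset.mem_insert.1 hp with rfl | hp <;> rcases Finset.mem_insert.1 hq with rfl | hq
  · exact Compat.refl S _
  · exact (key _ hq).symm
  · exact key _ hp
  · exact hf _ hp _ hq

/-- The "back" step. -/
lemma IsPartIso.exists_extend_right {X : Type} [DecidableEq X] {S : ColOrd X} (hS : S.Good)
    (hE : OnePointExtProp S) {f : Finset (X × X)} (hf : IsPartIso S f) (y : X) :
    ∃ x, IsPartIso S (insert (x, y) f) := by
  obtain ⟨x, hx⟩ := hf.swap.exists_extend hS hE y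
  refine ⟨x, ?_⟩
  have := hx.swap
  rwa [Finset.image_insert, Finset.image_image, Prod.swap_swap_eq, Finset.image_id] at this

lemma ultrahomogeneous_of_onePointExtProp {X : Type} [Countable X] {S : ColOrd X}
    (hS : S.Good) (hE : OnePointExtProp S) : Ultrahomogeneous S := by
  classical
  intro A B hA _ g hg hlt hc
  have := hA.fintype
  let P := {f : Finset (X × X) // IsPartIso S f}
  let p₀ : P := ⟨Finset.univ.image fun a : A => ((a : X), (g a : X)), by
    intro p hp q hq
    obtain ⟨a, -, rfl⟩ := Finset.mem_image.1 hp
    obtain ⟨b, -, rfl⟩ := Finset.mem_image.1 hq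
    refine ⟨?_, (hlt a b).symm, hc a b⟩
    simp only [← Subtype.ext_iff, hg.1.eq_iff]⟩
  let D : X ⊕ X → Order.Cofinal P := Sum.elim
    (fun x => ⟨{f | ∃ y, (x, y) ∈ f.1}, fun f => by
      obtain ⟨y, hy⟩ := f.2.exists_extend hS hE x
      exact ⟨⟨_, hy⟩, ⟨y, Finset.mem_insert_self _ _⟩, Finset.subset_insert _ _⟩⟩)
    (fun y => ⟨{f | ∃ x, (x, y) ∈ f.1}, fun f => by
      obtain ⟨x, hx⟩ := f.2.exists_extend_right hS hE y
      exact ⟨⟨_, hx⟩, ⟨x, Finset.mem_insert_self _ _⟩, Finset.subset_insert _ _⟩⟩)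
  have := Encodable.ofCountable X
  let I := Order.idealOfCofinals p₀ D
  have hcompat : ∀ f ∈ I, ∀ f' ∈ I, ∀ p ∈ f.1, ∀ q ∈ f'.1, Compat S p q := by
    intro f hf f' hf' p hp q hq
    obtain ⟨m, -, h1, h2⟩ := I.directed f hf f' hf'
    exact m.2 p (h1 hp) q (h2 hq)
  have hleft : ∀ x, ∃ y, ∃ f ∈ I, (x, y) ∈ f.1 := by
    intro x
    obtain ⟨f, ⟨y, hy⟩, hf⟩ := Order.cofinal_meets_idealOfCofinals p₀ D (Sum.inl x)
    exact ⟨y, f, hf, hy⟩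
  have hright : ∀ y, ∃ x, ∃ f ∈ I, (x, y) ∈ f.1 := by
    intro y
    obtain ⟨f, ⟨x, hx⟩, hf⟩ := Order.cofinal_meets_idealOfCofinals p₀ D (Sum.inr y)
    exact ⟨x, f, hf, hx⟩
  choose α F hF hα using hleft
  have hval : ∀ x y, (∃ f ∈ I, (x, y) ∈ f.1) → α x = y := by
    rintro x y ⟨f, hf, hxy⟩
    exact (hcompat _ (hF x) _ hf _ (hα x) _ hxy).1.1 rfl
  have hab : ∀ a b, Compat S (a, α a) (b, α b) := fun a b =>
    hcompat _ (hF a) _ (hF b) _ (hα a) _ (hα b)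
  refine ⟨α, ⟨fun y => ?_, fun a b h => (hab a b).1.2 h, fun a b => (hab a b).2.1,
    fun a b => (hab a b).2.2⟩, fun a => ?_⟩
  · obtain ⟨x, hx⟩ := hright y
    exact ⟨x, hval x y hx⟩
  · exact hval _ _ ⟨p₀, Order.mem_idealOfCofinals p₀ D,
      Finset.mem_image.2 ⟨a, Finset.mem_univ _, rfl⟩⟩

/-! ### The coloring driven by requests -/

open Classical in
/-- The color joining `n` to `i < n`, given the requests `τ`: the requested color `τ n i - 1` if
there is a request and no `j < i` with the same request has `{j, i}` of that color, and otherwise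
a color exceeding every color requested by `n`. The value for `i ≥ n` is irrelevant. -/
noncomputable def reqCol (τ : ℕ → ℕ →₀ ℕ) (n i : ℕ) : ℕ :=
  if ∃ _ : i < n, τ n i ≠ 0 ∧ ∀ j < i, τ n j = τ n i → reqCol τ i j + 1 ≠ τ n i then
    τ n i - 1
  else i + (τ n).sum fun _ v => v
termination_by n

/-- The condition under which the request of `n` at `i` is granted. -/
def Granted (τ : ℕ → ℕ →₀ ℕ) (n i : ℕ) : Prop :=
  i < n ∧ τ n i ≠ 0 ∧ ∀ j < i, τ n j = τ n i → reqCol τ i j + 1 ≠ τ n i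

lemma reqCol_of_granted {τ : ℕ → ℕ →₀ ℕ} {n i : ℕ} (h : Granted τ n i) :
    reqCol τ n i + 1 = τ n i := by
  rw [reqCol, if_pos ⟨h.1, h.2⟩]
  have := h.2.1
  omega

lemma reqCol_of_not_granted {τ : ℕ → ℕ →₀ ℕ} {n i : ℕ} (h : ¬ Granted τ n i) :
    reqCol τ n i = i + (τ n).sum fun _ v => v := by
  rw [reqCol, if_neg]
  rintro ⟨h1, h2⟩
  exact h ⟨h1, h2⟩

lemma apply_le_sum (f : ℕ →₀ ℕ) (i : ℕ) : f i ≤ f.sum fun _ v => v := by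
  by_cases hi : i ∈ f.support
  · exact Finset.single_le_sum (f := fun i => f i) (fun _ _ => Nat.zero_le _) hi
  · simp [Finsupp.notMem_support_iff.1 hi]

lemma reqCol_no_triangle (τ : ℕ → ℕ →₀ ℕ) {i j n : ℕ} (hij : i < j)
    (h1 : reqCol τ n i = reqCol τ n j) (h2 : reqCol τ j i = reqCol τ n j) : False := by
  by_cases hi : Granted τ n i <;> by_cases hj : Granted τ n j
  · have ei := reqCol_of_granted hi
    have ej := reqCol_of_granted hj
    exact hj.2.2 i hij (by omega) (by omega)
  · have ei := reqCol_of_granted hi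
    have ej := reqCol_of_not_granted hj
    have := apply_le_sum (τ n) i
    omega
  · have ei := reqCol_of_not_granted hi
    have ej := reqCol_of_granted hj
    have := apply_le_sum (τ n) j
    omega
  · have ei := reqCol_of_not_granted hi
    have ej := reqCol_of_not_granted hj
    omega

/-- The colored order on `ℕ` with order pulled back from `ℝ` along `g` and with coloring `reqCol`,
made symmetric. -/
noncomputable def reqOrd (g : ℕ → ℝ) (hg : Function.Injective g) (τ : ℕ → ℕ →₀ ℕ) :
    ColOrd ℕ where
  lt a b := g a < g b
  c a b := reqCol τ (max a b) (min a b)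
  lt_irrefl _ := lt_irrefl _
  lt_trans _ _ _ := lt_trans
  lt_total _ _ h := lt_or_gt_of_ne (hg.ne h)
  c_symm a b _ := by rw [max_comm, min_comm]

lemma reqOrd_c {g : ℕ → ℝ} {hg : Function.Injective g} {τ : ℕ → ℕ →₀ ℕ} {a b : ℕ} (h : a < b) :
    (reqOrd g hg τ).c a b = reqCol τ b a := by
  simp [reqOrd, max_eq_right h.le, min_eq_left h.le]

lemma reqOrd_good (g : ℕ → ℝ) (hg : Function.Injective g) (τ : ℕ → ℕ →₀ ℕ) :
    (reqOrd g hg τ).Good := by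
  set S := reqOrd g hg τ with hS
  have key : ∀ i j n, i < j → j < n → S.c i j = S.c j n → S.c i j = S.c i n → False := by
    intro i j n hij hjn h1 h2
    rw [hS, reqOrd_c hij] at h1 h2
    rw [reqOrd_c hjn] at h1
    rw [reqOrd_c (hij.trans hjn)] at h2
    exact reqCol_no_triangle τ hij (h2.symm.trans h1) h1
  rintro ⟨a, b, d, hab, hbd, had, h1, h2⟩
  have s1 := S.c_symm a b hab
  have s2 := S.c_symm b d hbd
  have s3 := S.c_symm a d had
  rcases lt_or_gt_of_ne hab with x | x <;> rcases lt_or_gt_of_ne hbd with y | y <;>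
    rcases lt_or_gt_of_ne had with z | z
  · exact key a b d x y (by omega) (by omega)
  · omega
  · exact key a d b z y (by omega) (by omega)
  · exact key d a b z x (by omega) (by omega)
  · exact key b a d x z (by omega) (by omega)
  · exact key b d a y z (by omega) (by omega)
  · omega
  · exact key d b a y x (by omega) (by omega)

/-! ### The one-point extension property -/

/-- Writing `k r` for a numbering of the requests, the points `q + k r √2` with `q` rational and
`r` a request are pairwise distinct, and dense for each fixed `r`. -/
lemma exists_dense_fibres :
    ∃ (g : ℕ → ℝ) (τ : ℕ → ℕ →₀ ℕ), Function.Injective g ∧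
      ∀ (r : ℕ →₀ ℕ) (x y : ℝ) (N : ℕ), x < y → ∃ n > N, τ n = r ∧ x < g n ∧ g n < y := by
  obtain ⟨e⟩ : Nonempty (ℕ ≃ ℚ × (ℕ →₀ ℕ)) := nonempty_equiv_of_countable
  obtain ⟨k, hk⟩ := exists_injective_nat (ℕ →₀ ℕ)
  refine ⟨fun n => ((e n).1 : ℝ) + k (e n).2 * √2, fun n => (e n).2, ?_, ?_⟩
  · intro a b hab
    simp only at hab
    have h2 : k (e a).2 = k (e b).2 := by
      by_contra hne
      have hne' : ((k (e a).2 : ℚ) - k (e b).2) ≠ 0 := sub_ne_zero.2 (by exact_mod_cast hne)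
      refine irrational_sqrt_two ⟨((e b).1 - (e a).1) / ((k (e a).2 : ℚ) - k (e b).2), ?_⟩
      have hne'' : ((k (e a).2 : ℝ) - k (e b).2) ≠ 0 := by exact_mod_cast hne'
      push_cast
      rw [div_eq_iff hne'']
      linarith
    rw [h2] at hab
    have h1 : (e a).1 = (e b).1 := by exact_mod_cast add_right_cancel hab
    exact e.injective (Prod.ext h1 (hk h2))
  · intro r x y N hxy
    obtain ⟨q₁, hq₁, hq₁'⟩ := exists_rat_btwn (sub_lt_sub_right hxy (k r * √2))
    obtain ⟨q₂, hq₂, hq₂'⟩ := exists_rat_btwn hq₁'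
    have hinf : ((fun q : ℚ => e.symm (q, r)) '' Set.Ioo q₁ q₂).Infinite :=
      (Set.Ioo_infinite (by exact_mod_cast hq₂)).image fun a _ b _ h => by simpa using h
    obtain ⟨_, ⟨q, ⟨h1, h2⟩, rfl⟩, hN⟩ := hinf.exists_gt N
    have h1' : (q₁ : ℝ) < q := by exact_mod_cast h1
    have h2' : (q : ℝ) < q₂ := by exact_mod_cast h2
    refine ⟨_, hN, by simp, ?_, ?_⟩ <;> simp only [Equiv.apply_symm_apply] <;> linarith

lemma reqOrd_onePointExtProp (g : ℕ → ℝ) (hg : Function.Injective g) (τ : ℕ → ℕ →₀ ℕ)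
    (hd : ∀ (r : ℕ →₀ ℕ) (x y : ℝ) (N : ℕ), x < y → ∃ n > N, τ n = r ∧ x < g n ∧ g n < y) :
    OnePointExtProp (reqOrd g hg τ) := by
  classical
  intro A hA B hB hAB
  have := hA.fintype
  obtain ⟨N, hN⟩ := hA.bddAbove
  let r : ℕ →₀ ℕ := Finsupp.onFinset hA.toFinset
    (fun a => if h : a ∈ A then B.c (some ⟨a, h⟩) none + 1 else 0) (by
      intro a ha
      by_contra h
      simp_all)
  have hr : ∀ a : A, r a = B.c (some a) none + 1 := fun a => by simp [r]
  have hr0 : ∀ a ∉ A, r a = 0 := fun a ha => by simp [r, ha]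
  -- The cut of the new point, as an open interval `(m, m')` of reals.
  let lo : Finset ℝ := (Finset.univ.filter fun a : A => B.lt (some a) none).image fun a : A => g a
  let hi : Finset ℝ := (Finset.univ.filter fun a : A => B.lt none (some a)).image fun a : A => g a
  have hlohi : ∀ x ∈ lo, ∀ y ∈ hi, x < y := by
    intro x hx y hy
    obtain ⟨a, ha, rfl⟩ := Finset.mem_image.1 hx
    obtain ⟨b, hb, rfl⟩ := Finset.mem_image.1 hy
    exact (hAB.1 a b).1 (B.lt_trans (Finset.mem_filter.1 ha).2 (Finset.mem_filter.1 hb).2)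
  obtain ⟨m, hm, hm'⟩ := Order.exists_between_finsets lo hi hlohi
  obtain ⟨m', hmm, hm''⟩ := Order.exists_between_finsets {m} hi (by simpa using hm')
  obtain ⟨t, htN, htr, htm, htm'⟩ := hd r m m' N (hmm m (by simp))
  have hlt : ∀ a : A, (a : ℕ) < t := fun a => (hN a.2).trans_lt htN
  have hlow : ∀ a : A, B.lt (some a) none → g a < g t := fun a ha =>
    (hm _ (Finset.mem_image.2 ⟨a, by simpa using ha, rfl⟩)).trans htm
  have hhigh : ∀ a : A, B.lt none (some a) → g t < g a := fun a ha =>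
    htm'.trans (hm'' _ (Finset.mem_image.2 ⟨a, by simpa using ha, rfl⟩))
  have hcol : ∀ a : A, B.c (some a) none = (reqOrd g hg τ).c a t := by
    intro a
    -- A refusal at `a` would exhibit a monochromatic triangle in `B`.
    have hgr : Granted τ t a := by
      refine ⟨hlt a, by rw [htr, hr]; omega, fun j hj hja hbad => ?_⟩
      rw [htr] at hja hbad
      have hjA : j ∈ A := by
        by_contra hjA
        rw [hr0 j hjA, hr] at hja
        omega
      rw [hr ⟨j, hjA⟩, hr] at hja
      rw [hr] at hbad
      have hja' := hAB.2 ⟨j, hjA⟩ a hj.ne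
      rw [reqOrd_c hj] at hja'
      refine hB ⟨some ⟨j, hjA⟩, some a, none, ?_, by simp, by simp, by omega, by omega⟩
      intro h
      exact hj.ne (congrArg Subtype.val (Option.some.inj h))
    have := reqCol_of_granted hgr
    rw [htr, hr] at this
    rw [reqOrd_c (hlt a)]
    omega
  refine ⟨t, fun ht => lt_irrefl t (hlt ⟨t, ht⟩), fun a => ⟨⟨hlow a, fun h => ?_⟩,
    ⟨hhigh a, fun h => ?_⟩⟩, fun a => ⟨hcol a, ?_⟩⟩
  · exact (B.lt_total (some a) none (by simp)).resolve_right fun h' => lt_asymm h (hhigh a h')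
  · exact (B.lt_total (some a) none (by simp)).resolve_left fun h' => lt_asymm h (hlow a h')
  · rw [← B.c_symm (some a) none (by simp), hcol a, (reqOrd g hg τ).c_symm _ _ (hlt a).ne]

/-- There exists a countably infinite good colored order which is
ultrahomogeneous and has the one-point extension property, i.e. the class of finite
good colored orders has a Fraïssé limit. -/
theorem exists_fraisse_limit :
    ∃ (M : Type) (S : ColOrd M), IsFLim S := by
  obtain ⟨g, τ, hg, hd⟩ := exists_dense_fibres
  have hgood := reqOrd_good g hg τ
  have hext := reqOrd_onePointExtProp g hg τ hd
  exact ⟨ℕ, reqOrd g hg τ, inferInstance, inferInstance, hgood,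
    ultrahomogeneous_of_onePointExtProp hgood hext, hext⟩
end

section
/- Let M be a Fraïssé limit of the class of finite good colored orders, let x ⊆ M be finite, let t1 ∈ M \ x, and let q ∈ ℕ be a color such that q ≠ c(t1, v) for every v ∈ x. Then there exists t2 ∈ M with t2 ∉ x, t2 ≠ t1, c(t2, t1) = q, and for every v ∈ x: c(t2, v) = c(t1, v) and (t2 < v ↔ t1 < v). -/
/-- The map `A ∪ {new point} → M` that is the inclusion on `A` and sends the new point
to the point `t1` it duplicates. -/
def twinProj {M : Type} (t1 : M) (A : Set M) : Option A → M
  | none => t1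
  | some a => a

/-- Two points of `Option A` with the same projection are equal if neither is the new point. -/
theorem twinProj_inj {M : Type} {t1 : M} {A : Set M} {u v : Option A}
    (h : twinProj t1 A u = twinProj t1 A v) (hu : u ≠ none) (hv : v ≠ none) : u = v := by
  cases u <;> cases v <;> simp_all [twinProj, Subtype.ext_iff]

open Classical in
/-- The extension of the structure on `A` by a duplicate of `t1`, placed immediately above `t1`
and joined to it by the color `q`. Meaningful for `t1 ∈ A`. -/
noncomputable def twinExt {M : Type} (S : ColOrd M) (t1 : M) (A : Set M) (q : ℕ) :
    ColOrd (Option A) where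
  lt u v := S.lt (twinProj t1 A u) (twinProj t1 A v) ∨
    (twinProj t1 A u = twinProj t1 A v ∧ u ≠ none ∧ v = none)
  c u v := if twinProj t1 A u = twinProj t1 A v then q
    else S.c (twinProj t1 A u) (twinProj t1 A v)
  lt_irrefl a := by
    rintro (h | ⟨_, h, h'⟩)
    · exact S.lt_irrefl _ h
    · exact h h'
  lt_trans a b d := by
    rintro (h | ⟨h, h1, h2⟩) (k | ⟨k, k1, k2⟩)
    · exact Or.inl (S.lt_trans h k)
    · exact Or.inl (k ▸ h)
    · exact Or.inl (h ▸ k)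
    · exact absurd h2 k1
  lt_total a b hab := by
    by_cases h : twinProj t1 A a = twinProj t1 A b
    · by_cases ha : a = none
      · exact Or.inr (Or.inr ⟨h.symm, fun hb => hab (ha.trans hb.symm), ha⟩)
      · by_cases hb : b = none
        · exact Or.inl (Or.inr ⟨h, ha, hb⟩)
        · exact absurd (twinProj_inj h ha hb) hab
    · exact (S.lt_total _ _ h).imp Or.inl Or.inl
  c_symm a b _ := by
    by_cases h : twinProj t1 A a = twinProj t1 A b
    · simp [h]
    · simp [h, Ne.symm h, S.c_symm _ _ h]

theorem twinExt_good {M : Type} (S : ColOrd M) (hS : S.Good) (t1 : M) (x : Set M)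
    (q : ℕ) (hq : ∀ v ∈ x, q ≠ S.c t1 v) : (twinExt S t1 (insert t1 x) q).Good := by
  -- Two distinct points with the same projection project to `t1`, one of them being new.
  have key : ∀ u v : Option ↥(insert t1 x), u ≠ v →
      twinProj t1 _ u = twinProj t1 _ v → twinProj t1 _ u = t1 ∧ (u = none ∨ v = none) := by
    intro u v huv h
    by_cases hu : u = none
    · subst hu; exact ⟨rfl, Or.inl rfl⟩
    · by_cases hv : v = none
      · subst hv; exact ⟨h, Or.inr rfl⟩
      · exact absurd (twinProj_inj h hu hv) huv
  -- A third point then projects into `x`.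
  have third : ∀ u v w : Option ↥(insert t1 x), u ≠ v → v ≠ w → u ≠ w →
      twinProj t1 _ u = twinProj t1 _ v →
      twinProj t1 _ u = t1 ∧ twinProj t1 _ w ≠ t1 ∧ q ≠ S.c t1 (twinProj t1 _ w) := by
    intro u v w huv hvw huw h
    obtain ⟨h1, h2⟩ := key u v huv h
    have hw : twinProj t1 _ w ≠ t1 := by
      intro hw
      have h3 := (key u w huw (h1.trans hw.symm)).2
      have h4 := (key v w hvw (h.symm.trans (h1.trans hw.symm))).2
      grind
    refine ⟨h1, hw, hq _ ?_⟩
    cases w with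
    | none => exact absurd rfl hw
    | some w => exact w.2.resolve_left hw
  rintro ⟨a, b, d, hab, hbd, had, h1, h2⟩
  simp only [twinExt] at h1 h2
  have t_abd := third a b d hab hbd had
  have t_bda := third b d a hbd had.symm hab.symm
  have t_adb := third a d b had hbd.symm hab
  by_cases e1 : twinProj t1 _ a = twinProj t1 _ b
  · grind
  by_cases e2 : twinProj t1 _ b = twinProj t1 _ d
  · have := S.c_symm _ _ e1
    grind
  by_cases e3 : twinProj t1 _ a = twinProj t1 _ d
  · grind
  rw [if_neg e1, if_neg e2] at h1
  rw [if_neg e1, if_neg e3] at h2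
  exact hS ⟨_, _, _, e1, e2, e3, h1, h2⟩

theorem twinExt_extendsOn {M : Type} (S : ColOrd M) (t1 : M) (A : Set M) (q : ℕ) :
    ExtendsOn S A (twinExt S t1 A q) := by
  refine ⟨fun a b => ?_, fun a b hab => ?_⟩
  · simp [twinExt, twinProj]
  · simp [twinExt, twinProj, hab]

/-- In a Fraïssé limit `M`, given a finite set `x`, a point `t1 ∉ x`
and a color `q` distinct from all colors `c t1 v` for `v ∈ x`, there is a point `t2`
realizing the same quantifier-free type as `t1` over `x` with `c t2 t1 = q`. -/
theorem exists_twin_with_color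
    {M : Type} (S : ColOrd M) (hS : IsFLim S)
    (x : Set M) (hx : x.Finite) (t1 : M) (ht1 : t1 ∉ x)
    (q : ℕ) (hq : ∀ v ∈ x, q ≠ S.c t1 v) :
    ∃ t2 : M, t2 ∉ x ∧ t2 ≠ t1 ∧ S.c t2 t1 = q ∧
      ∀ v ∈ x, S.c t2 v = S.c t1 v ∧ (S.lt t2 v ↔ S.lt t1 v) := by
  obtain ⟨-, -, hgood, -, hext⟩ := hS
  obtain ⟨t2, hA, hlt, hc⟩ := hext (insert t1 x) (hx.insert t1) (twinExt S t1 _ q)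
    (twinExt_good S hgood t1 x q hq) (twinExt_extendsOn S t1 _ q)
  refine ⟨t2, fun h => hA (Or.inr h), fun h => hA (Or.inl h), ?_, fun v hv => ?_⟩
  · have := (hc ⟨t1, Set.mem_insert t1 x⟩).2
    simpa [twinExt, twinProj] using this.symm
  · have hne : t1 ≠ v := fun h => ht1 (h ▸ hv)
    have h1 := (hc ⟨v, Set.mem_insert_of_mem t1 hv⟩).2
    have h2 := (hlt ⟨v, Set.mem_insert_of_mem t1 hv⟩).2
    simp only [twinExt, twinProj] at h2
    exact ⟨h1.symm.trans (if_neg hne), by simpa using h2.symm⟩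
end

section
/- Let M be a Fraïssé limit of the class of finite good colored orders. Let N be a good colored order, j : M → N an embedding, and t ∈ N with t ∉ j[M] and N = j[M] ∪ {t}. Then for every finite subset x ⊆ M there exist distinct elements t1, t2 ∈ M \ x and an automorphism α of M such that α(v) = v for all v ∈ x, α(t1) = t2, and the color c_M(t1, t2) equals the color c_N(t, j(t1)). -/
/-- A cut `L` of the finite set `A` (the points below the new one) and colours `q` to the new
point that complete no monochromatic triangle with two points of `A` are realized in `X`. -/
theorem OnePointExtProp.realize {X : Type} {S : ColOrd X} (hS : OnePointExtProp S)
    (hg : S.Good) (A : Set X) (hA : A.Finite) (L : X → Prop) (q : X → ℕ)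
    (hL : ∀ a ∈ A, ∀ b ∈ A, S.lt a b → L b → L a)
    (hq : ∀ a ∈ A, ∀ b ∈ A, a ≠ b → ¬ (q a = q b ∧ S.c a b = q a)) :
    ∃ s : X, s ∉ A ∧ ∀ a ∈ A, (S.lt a s ↔ L a) ∧ (S.lt s a ↔ ¬ L a) ∧
      S.c a s = q a ∧ S.c s a = q a := by
  let B : ColOrd (Option A) :=
    { lt := fun u v => match u, v with
        | some a, some b => S.lt a b
        | some a, none => L a
        | none, some b => ¬ L b
        | none, none => False
      c := fun u v => match u, v with
        | some a, some b => S.c a b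
        | some a, none => q a
        | none, some b => q b
        | none, none => 0
      lt_irrefl := by
        rintro (_ | a)
        · exact id
        · exact S.lt_irrefl _
      lt_trans := by
        rintro (_ | ⟨a, ha⟩) (_ | ⟨b, hb⟩) (_ | ⟨d, hd⟩) h1 h2
        · exact h1
        · exact h1.elim
        · exact h1 h2
        · exact fun h => h1 (hL b hb d hd h2 h)
        · exact h2.elim
        · rcases Classical.em (a = d) with rfl | hne
          · exact (h2 h1).elim
          · exact (S.lt_total a d hne).resolve_right fun h => h2 (hL d hd a ha h h1)
        · exact hL a ha b hb h1 h2
        · exact S.lt_trans h1 h2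
      lt_total := by
        rintro (_ | a) (_ | b) h
        · exact (h rfl).elim
        · exact (Classical.em (L b)).symm
        · exact Classical.em (L a)
        · exact S.lt_total a b fun e => h (congrArg some (Subtype.ext e))
      c_symm := by
        rintro (_ | a) (_ | b) h
        · rfl
        · rfl
        · rfl
        · exact S.c_symm a b fun e => h (congrArg some (Subtype.ext e)) }
  have hB : B.Good := by
    rintro ⟨_ | ⟨a, ha⟩, _ | ⟨b, hb⟩, _ | ⟨d, hd⟩, h1, h2, h3, e1, e2⟩ <;>
      simp only [B, ne_eq, not_true_eq_false, Option.some.injEq, Subtype.mk.injEq] at h1 h2 h3 e1 e2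
    · exact hq b hb d hd h2 ⟨e2, e1.symm⟩
    · exact hq a ha d hd h3 ⟨e1, e2.symm⟩
    · exact hq a ha b hb h1 ⟨e2.symm.trans e1, e2⟩
    · exact hg ⟨a, b, d, h1, h2, h3, e1, e2⟩
  obtain ⟨s, hs, hlt, hc⟩ := hS A hA B hB ⟨fun _ _ => Iff.rfl, fun _ _ _ => rfl⟩
  refine ⟨s, hs, fun a ha => ⟨(hlt ⟨a, ha⟩).1.symm, (hlt ⟨a, ha⟩).2.symm,
    (hc ⟨a, ha⟩).1.symm, (hc ⟨a, ha⟩).2.symm⟩⟩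

theorem Ultrahomogeneous.exists_auto {X : Type} {S : ColOrd X} (hS : Ultrahomogeneous S)
    (x : Set X) (hx : x.Finite) (s r : X) (hs : s ∉ x) (hr : r ∉ x)
    (h : ∀ v ∈ x, (S.lt v r ↔ S.lt v s) ∧ (S.lt r v ↔ S.lt s v) ∧
      S.c v r = S.c v s ∧ S.c r v = S.c s v) :
    ∃ α : X → X, IsAuto S α ∧ (∀ v ∈ x, α v = v) ∧ α s = r := by
  classical
  have hxs : ∀ v ∈ x, v ≠ s := fun v hv e => hs (e ▸ hv)
  have hxr : ∀ v ∈ x, v ≠ r := fun v hv e => hr (e ▸ hv)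
  let f : X → X := fun a => if a = s then r else a
  have fs : f s = r := if_pos rfl
  have fx : ∀ v ∈ x, f v = v := fun v hv => if_neg (hxs v hv)
  have hf : ∀ a ∈ insert s x, f a ∈ insert r x := by
    rintro a (rfl | ha)
    · exact Or.inl fs
    · rw [fx a ha]; exact Or.inr ha
  let g : ↑(insert s x) → ↑(insert r x) := fun a => ⟨f a, hf a a.2⟩
  have ginj : Function.Injective g := by
    rintro ⟨a, rfl | ha⟩ ⟨b, rfl | hb⟩ e <;> simp only [g, Subtype.mk.injEq, fs] at e ⊢
    · rw [fx b hb] at e; exact (hxr b hb e.symm).elim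
    · rw [fx a ha] at e; exact (hxr a ha e).elim
    · rw [fx a ha, fx b hb] at e; exact Subtype.ext e
  have gsurj : Function.Surjective g := by
    rintro ⟨b, rfl | hb⟩
    · exact ⟨⟨s, Or.inl rfl⟩, Subtype.ext fs⟩
    · exact ⟨⟨b, Or.inr hb⟩, Subtype.ext (fx b hb)⟩
  have glt : ∀ a b : ↑(insert s x), S.lt (g a : X) (g b : X) ↔ S.lt a b := by
    rintro ⟨a, rfl | ha⟩ ⟨b, rfl | hb⟩ <;> simp only [g, fs]
    · exact iff_of_false (S.lt_irrefl _) (S.lt_irrefl _)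
    · rw [fx b hb]; exact (h b hb).2.1
    · rw [fx a ha]; exact (h a ha).1
    · rw [fx a ha, fx b hb]
  have gc : ∀ a b : ↑(insert s x), (a : X) ≠ (b : X) → S.c (g a : X) (g b : X) = S.c a b := by
    rintro ⟨a, rfl | ha⟩ ⟨b, rfl | hb⟩ hab <;> simp only [g, fs]
    · exact (hab rfl).elim
    · rw [fx b hb]; exact (h b hb).2.2.2
    · rw [fx a ha]; exact (h a ha).2.2.1
    · rw [fx a ha, fx b hb]
  obtain ⟨α, hα, hαg⟩ := hS _ _ (hx.insert s) (hx.insert r) g ⟨ginj, gsurj⟩ glt gc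
  exact ⟨α, hα, fun v hv => (hαg ⟨v, Or.inr hv⟩).trans (fx v hv),
    (hαg ⟨s, Or.inl rfl⟩).trans fs⟩

/-- If `N` is a good colored order obtained from a Fraïssé limit `M`
by adding one new point `t` over the image of an embedding `j : M → N`, then for every
finite `x ⊆ M` there are distinct `t1, t2 ∈ M \ x` and an automorphism `α` of `M`
fixing `x` pointwise with `α t1 = t2` and `c_M t1 t2 = c_N t (j t1)`. -/
theorem exists_pair_realizing_outside_color
    {M N : Type} (S : ColOrd M) (hS : IsFLim S)
    (T : ColOrd N) (hT : T.Good) (j : M → N) (hj : IsEmb S T j)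
    (t : N) (ht : t ∉ Set.range j) (hN : ∀ y : N, y ∈ Set.range j ∨ y = t) :
    ∀ x : Set M, x.Finite →
      ∃ t1 t2 : M, t1 ∉ x ∧ t2 ∉ x ∧ t1 ≠ t2 ∧
        ∃ α : M → M, IsAuto S α ∧ (∀ v ∈ x, α v = v) ∧ α t1 = t2 ∧
          S.c t1 t2 = T.c t (j t1) := by
  intro x hx
  classical
  obtain ⟨-, -, hg, hu, he⟩ := hS
  obtain ⟨hinj, hjlt, hjc⟩ := hj
  have htj : ∀ v, t ≠ j v := fun v e => ht ⟨v, e.symm⟩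
  have hp : ∀ a b, a ≠ b → ¬ (T.c t (j a) = T.c t (j b) ∧ S.c a b = T.c t (j a)) := by
    rintro a b hab ⟨h1, h2⟩
    exact hT ⟨t, j a, j b, htj a, hinj.ne hab, htj b, by rw [hjc a b hab, h2], h1⟩
  -- `t1` has the type of `t` over `x`.
  obtain ⟨t1, ht1, h1⟩ := he.realize hg x hx (fun a => T.lt (j a) t) (fun a => T.c t (j a))
    (fun a _ b _ hab hb => T.lt_trans ((hjlt a b).1 hab) hb) (fun a _ b _ => hp a b)
  have hx1 : ∀ v ∈ x, v ≠ t1 := fun v hv e => ht1 (e ▸ hv)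
  have hk : ∀ v ∈ x, S.c v t1 ≠ T.c t (j t1) := fun v hv e =>
    hp v t1 (hx1 v hv) ⟨(h1 v hv).2.2.1.symm.trans e, (h1 v hv).2.2.1⟩
  -- `t2` has the type of `t1` over `x`, lies above `t1`, and is joined to it by `c_N(t, j t1)`.
  obtain ⟨t2, ht2, h2⟩ := he.realize hg (insert t1 x) (hx.insert t1)
    (fun a => a = t1 ∨ S.lt a t1) (fun a => if a = t1 then T.c t (j t1) else S.c a t1)
    (by
      rintro a - b - hab (rfl | hb)
      · exact Or.inr hab
      · exact Or.inr (S.lt_trans hab hb))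
    (by
      rintro a (rfl | ha) b (rfl | hb) hab ⟨e1, e2⟩
      · exact hab rfl
      · rw [if_pos rfl, if_neg (hx1 b hb)] at e1
        exact hk b hb e1.symm
      · rw [if_pos rfl, if_neg (hx1 a ha)] at e1
        exact hk a ha e1
      · rw [if_neg (hx1 a ha)] at e1 e2
        rw [if_neg (hx1 b hb)] at e1
        exact hg ⟨a, b, t1, hab, hx1 b hb, hx1 a ha, e2.trans e1, e2⟩)
  have ht2x : t2 ∉ x := fun h => ht2 (Or.inr h)
  obtain ⟨α, hα, hαx, hα1⟩ := hu.exists_auto x hx t1 t2 ht1 ht2x (by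
    intro v hv
    obtain ⟨a1, a2, a3, a4⟩ := h2 v (Or.inr hv)
    have hne := hx1 v hv
    simp only [hne, false_or, if_false] at a1 a2 a3 a4
    refine ⟨a1, a2.trans ⟨fun h => (S.lt_total v t1 hne).resolve_left h,
      fun h h' => S.lt_irrefl _ (S.lt_trans h h')⟩, a3, a4.trans (S.c_symm v t1 hne)⟩)
  refine ⟨t1, t2, ht1, ht2x, fun e => ht2 (Or.inl e.symm), α, hα, hαx, hα1, ?_⟩
  exact (h2 t1 (Or.inl rfl)).2.2.1.trans (if_pos rfl)
end

section
/- Let Q ⊆ ℕ be an infinite set whose complement ℕ \ Q is infinite. Then there exists a color-enlarging Katětov assignment from Q to ℕ: for every finite good Q-colored order x, a countable good colored order K(x) (with colors in ℕ) and an embedding η_x : x → K(x); for every embedding f : x → y of finite good Q-colored orders, an embedding K(f) : K(x) → K(y); such that K(id_x) = id_{K(x)}, K(g ∘ f) = K(g) ∘ K(f), the naturality condition K(f) ∘ η_x = η_y ∘ f holds, and for every subset A ⊆ x and every good Q-colored order B = A ∪ {b} extending the induced structure on A by one new point b, there exists t ∈ K(x) such that the map sending a ↦ η_x(a) for a ∈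 A and b ↦ t is an embedding of B into K(x). -/
/-- A colored order is `Q`-colored if all colors of pairs of distinct elements lie
in `Q`. -/
def QCol {X : Type} (Q : Set ℕ) (S : ColOrd X) : Prop :=
  ∀ a b : X, a ≠ b → S.c a b ∈ Q

/-- A color-enlarging Katětov assignment from `Q` to `ℕ`: a functorial assignment
`x ↦ K(x)` on finite good `Q`-colored orders, with values countable good colored
orders (colors in `ℕ`), together with natural embeddings `η_x : x → K(x)` such that
every good `Q`-colored one-point extension of a subset of `x` is realized in `K(x)`
over `η_x`. -/
structure ColorKatetov (Q : Set ℕ) where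
  /-- the carrier of `K(x)` -/
  Carrier : ∀ (X : Type) (S : ColOrd X), Finite X → QCol Q S → S.Good → Type
  /-- the colored-order structure of `K(x)` -/
  str : ∀ (X : Type) (S : ColOrd X) (hf : Finite X) (hq : QCol Q S) (hg : S.Good),
    ColOrd (Carrier X S hf hq hg)
  countable : ∀ X S hf hq hg, Countable (Carrier X S hf hq hg)
  good : ∀ X S hf hq hg, (str X S hf hq hg).Good
  /-- the natural embedding `η_x : x → K(x)` -/
  eta : ∀ X S hf hq hg, X → Carrier X S hf hq hg
  eta_emb : ∀ X S hf hq hg, IsEmb S (str X S hf hq hg) (eta X S hf hq hg)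
  /-- the action `K(f)` on embeddings -/
  map : ∀ (X Y : Type) (SX : ColOrd X) (SY : ColOrd Y)
    (hfX : Finite X) (hqX : QCol Q SX) (hgX : SX.Good)
    (hfY : Finite Y) (hqY : QCol Q SY) (hgY : SY.Good)
    (f : X → Y), IsEmb SX SY f →
    Carrier X SX hfX hqX hgX → Carrier Y SY hfY hqY hgY
  map_emb : ∀ X Y SX SY hfX hqX hgX hfY hqY hgY (f : X → Y) (hf : IsEmb SX SY f),
    IsEmb (str X SX hfX hqX hgX) (str Y SY hfY hqY hgY)
      (map X Y SX SY hfX hqX hgX hfY hqY hgY f hf)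
  map_id : ∀ X S hf hq hg (h : IsEmb S S id),
    map X X S S hf hq hg hf hq hg id h = id
  map_comp : ∀ (X Y Z : Type) (SX : ColOrd X) (SY : ColOrd Y) (SZ : ColOrd Z)
    (hfX : Finite X) (hqX : QCol Q SX) (hgX : SX.Good)
    (hfY : Finite Y) (hqY : QCol Q SY) (hgY : SY.Good)
    (hfZ : Finite Z) (hqZ : QCol Q SZ) (hgZ : SZ.Good)
    (f : X → Y) (g : Y → Z) (hf : IsEmb SX SY f) (hg : IsEmb SY SZ g)
    (hgf : IsEmb SX SZ (g ∘ f)),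
    map X Z SX SZ hfX hqX hgX hfZ hqZ hgZ (g ∘ f) hgf =
      map Y Z SY SZ hfY hqY hgY hfZ hqZ hgZ g hg ∘
        map X Y SX SY hfX hqX hgX hfY hqY hgY f hf
  naturality : ∀ X Y SX SY hfX hqX hgX hfY hqY hgY (f : X → Y) (hf : IsEmb SX SY f),
    map X Y SX SY hfX hqX hgX hfY hqY hgY f hf ∘ eta X SX hfX hqX hgX =
      eta Y SY hfY hqY hgY ∘ f
  realizes : ∀ X S hf hq hg (A : Set X),
    ∀ B : ColOrd (Option A), B.Good → QCol Q B → ExtendsOn S A B →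
      ∃ t : Carrier X S hf hq hg,
        IsEmb B (str X S hf hq hg)
          (fun o => Option.elim o t (fun a => eta X S hf hq hg a))

namespace Kat

/-! ### Symmetric distances without monochromatic triangles -/

/-- A symmetric function `d` such that a triple of points with the same value of `d` on all three
pairs is constant. In particular `d` is a coloring without monochromatic triangles. -/
structure Rainbow {α : Type} (d : α → α → ℕ) : Prop where
  symm : ∀ a b, d a b = d b a
  eq : ∀ a b e, d a b = d b e → d a b = d a e → a = b ∧ b = e

/-- A rainbow distance on `ℕ`: the code of the unordered pair. -/
def natDist (m n : ℕ) : ℕ := if m = n then 0 else Nat.pair (min m n) (max m n) + 1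

theorem rainbow_natDist : Rainbow natDist where
  symm a b := by simp only [natDist, min_comm, max_comm, eq_comm]
  eq a b e h1 h2 := by
    unfold natDist at h1 h2
    split_ifs at h1 h2 <;> simp only [add_left_inj, Nat.pair_eq_pair] at h1 h2 <;> omega

open Classical in
/-- The distance on `X ∪ {-∞}` (with `none` for `-∞`) given by the coloring of `S`. -/
noncomputable def optDist {X : Type} (S : ColOrd X) : Option X → Option X → ℕ
  | none, none => 0
  | none, some _ => 1
  | some _, none => 1
  | some a, some b => if a = b then 0 else S.c a b + 2

theorem rainbow_optDist {X : Type} (S : ColOrd X) (hg : S.Good) : Rainbow (optDist S) where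
  symm a b := by
    rcases a with _ | a <;> rcases b with _ | b <;> simp only [optDist]
    by_cases h : a = b
    · simp [h]
    · simp [h, Ne.symm h, S.c_symm a b h]
  eq a b e h1 h2 := by
    rcases a with _ | a <;> rcases b with _ | b <;> rcases e with _ | e <;>
      simp only [optDist] at h1 h2 <;> try split_ifs at h1 h2
    all_goals first | omega | skip
    all_goals try (subst_vars; simp; done)
    rename_i h3 h4 h5
    exact absurd ⟨a, b, e, h3, h4, h5, by omega, by omega⟩ hg

/-- Position-by-position distance of two words over the alphabet `α × ℕ`. -/
def wordDist {α : Type} (d : α → α → ℕ) : List (α × ℕ) → List (α × ℕ) → ℕ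
  | [], [] => 0
  | [], _ :: _ => 1
  | _ :: _, [] => 1
  | a :: l, b :: m =>
    Nat.pair (Nat.pair (d a.1 b.1) (natDist a.2 b.2)) (wordDist d l m) + 2

theorem rainbow_wordDist {α : Type} {d : α → α → ℕ} (hd : Rainbow d) :
    Rainbow (wordDist d) where
  symm l := by
    induction l with
    | nil => rintro (_ | _) <;> simp [wordDist]
    | cons a l ih =>
      rintro (_ | ⟨b, m⟩)
      · simp [wordDist]
      · simp only [wordDist, ih m, hd.symm a.1, rainbow_natDist.symm a.2]
  eq l := by
    induction l with
    | nil => rintro (_ | _) (_ | _) <;> simp [wordDist]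
    | cons a l ih =>
      rintro (_ | ⟨b, m⟩) (_ | ⟨e, n⟩) h1 h2 <;>
        simp only [wordDist, add_left_inj, Nat.pair_eq_pair] at h1 h2 <;> try omega
      obtain ⟨⟨h11, h12⟩, h13⟩ := h1
      obtain ⟨⟨h21, h22⟩, h23⟩ := h2
      obtain ⟨rfl, rfl⟩ := ih _ _ h13 h23
      obtain ⟨hab, hbe⟩ := hd.eq _ _ _ h11 h21
      obtain ⟨hab', hbe'⟩ := rainbow_natDist.eq _ _ _ h12 h22
      exact ⟨by rw [Prod.ext hab hab'], by rw [Prod.ext hbe hbe']⟩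

/-! ### The order on words -/

/-- Letters of the words over `X`; `none` stands for `-∞`. -/
abbrev Letter (X : Type) := Option X × ℕ

/-- The order on `X ∪ {-∞}`. -/
def optLt {X : Type} (S : ColOrd X) : Option X → Option X → Prop
  | _, none => False
  | none, some _ => True
  | some a, some b => S.lt a b

/-- The lexicographic order on letters. -/
def letterLt {X : Type} (S : ColOrd X) (a b : Letter X) : Prop :=
  optLt S a.1 b.1 ∨ a.1 = b.1 ∧ a.2 < b.2

section
variable {X : Type} (S : ColOrd X)

theorem optLt_irrefl (a : Option X) : ¬ optLt S a a := by
  rcases a with _ | a <;> simp [optLt, S.lt_irrefl]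

theorem optLt_trans {a b d : Option X} (h1 : optLt S a b) (h2 : optLt S b d) :
    optLt S a d := by
  rcases a with _ | a <;> rcases b with _ | b <;> rcases d with _ | d <;>
    simp_all only [optLt]
  exact S.lt_trans h1 h2

theorem optLt_total (a b : Option X) (h : a ≠ b) : optLt S a b ∨ optLt S b a := by
  rcases a with _ | a <;> rcases b with _ | b <;> simp_all [optLt]
  exact S.lt_total a b h

theorem letterLt_irrefl (a : Letter X) : ¬ letterLt S a a := by
  simp [letterLt, optLt_irrefl]

theorem letterLt_trans {a b d : Letter X} (h1 : letterLt S a b) (h2 : letterLt S b d) :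
    letterLt S a d := by
  obtain ⟨a, m⟩ := a
  obtain ⟨b, n⟩ := b
  obtain ⟨d, k⟩ := d
  simp only [letterLt] at *
  rcases h1 with h1 | ⟨rfl, h1⟩ <;> rcases h2 with h2 | ⟨rfl, h2⟩
  · exact Or.inl (optLt_trans S h1 h2)
  · exact Or.inl h1
  · exact Or.inl h2
  · exact Or.inr ⟨rfl, h1.trans h2⟩

theorem letterLt_total (a b : Letter X) (h : a ≠ b) : letterLt S a b ∨ letterLt S b a := by
  obtain ⟨a, m⟩ := a
  obtain ⟨b, n⟩ := b
  simp only [letterLt]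
  by_cases hab : a = b
  · subst hab
    have : m ≠ n := fun e => h (by rw [e])
    rcases this.lt_or_gt with h | h <;> simp [h]
  · rcases optLt_total S a b hab with h | h <;> simp [h]

theorem lex_irrefl (l : List (Letter X)) : ¬ List.Lex (letterLt S) l l := by
  induction l with
  | nil => intro h; cases h
  | cons a l ih =>
    intro h
    rcases h with _ | h | h
    · exact letterLt_irrefl S a h
    · exact ih h

theorem lex_trans {l m n : List (Letter X)} (h1 : List.Lex (letterLt S) l m)
    (h2 : List.Lex (letterLt S) m n) : List.Lex (letterLt S) l n := by
  induction h1 generalizing n with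
  | nil => cases h2 <;> exact .nil
  | rel h =>
    cases h2 with
    | rel h' => exact .rel (letterLt_trans S h h')
    | cons h' => exact .rel h
  | cons h ih =>
    cases h2 with
    | rel h' => exact .rel h'
    | cons h' => exact .cons (ih h')

theorem lex_total (l m : List (Letter X)) (h : l ≠ m) :
    List.Lex (letterLt S) l m ∨ List.Lex (letterLt S) m l := by
  induction l generalizing m with
  | nil =>
    cases m with
    | nil => exact absurd rfl h
    | cons => exact Or.inl .nil
  | cons a l ih =>
    cases m with
    | nil => exact Or.inr .nil
    | cons b m =>
      by_cases hab : a = b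
      · subst hab
        exact (ih m fun e => h (by rw [e])).imp .cons .cons
      · exact (letterLt_total S a b hab).imp .rel .rel

end

/-! ### The structure `K(x)` -/

/-- The word `l` prescribes colors in `Q`, at most one for each point of `X`, and a new point with
the prescribed colors forms no monochromatic triangle with two points of `X`. -/
def Valid {X : Type} (Q : Set ℕ) (S : ColOrd X) (l : List (Letter X)) : Prop :=
  (∀ a q, (some a, q) ∈ l → q ∈ Q) ∧
  (∀ a q r, (some a, q) ∈ l → (some a, r) ∈ l → q = r) ∧
  (∀ a b q, a ≠ b → (some a, q) ∈ l → (some b, q) ∈ l → S.c a b ≠ q)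

/-- Types over `X`: the new point lies immediately above `t.1.1 ∈ X ∪ {-∞}`, and `t.1.2` prescribes
some of its colors. -/
abbrev Typ {X : Type} (Q : Set ℕ) (S : ColOrd X) :=
  {t : Option X × List (Letter X) // Valid Q S t.2}

/-- The underlying set of `K(x)`. -/
abbrev Car {X : Type} (Q : Set ℕ) (S : ColOrd X) := X ⊕ Typ Q S

/-- The word attached to a type. -/
def word {X : Type} {Q : Set ℕ} {S : ColOrd X} (t : Typ Q S) : List (Letter X) :=
  (t.1.1, 1) :: t.1.2

/-- The word attached to a point of `K(x)`. The numbers `0` and `1` in the first letter put a type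
with first component `u` above the point `u` of `X`. -/
def key {X : Type} {Q : Set ℕ} {S : ColOrd X} : Car Q S → List (Letter X)
  | .inl y => [(some y, 0)]
  | .inr t => word t

theorem word_injective {X : Type} {Q : Set ℕ} {S : ColOrd X} :
    Function.Injective (word : Typ Q S → _) := by
  rintro ⟨⟨u, l⟩, h⟩ ⟨⟨v, m⟩, h'⟩ e
  simpa [word] using e

theorem key_injective {X : Type} {Q : Set ℕ} {S : ColOrd X} :
    Function.Injective (key : Car Q S → _) := by
  rintro (a | a) (b | b) e
  · simpa [key] using e
  · simp [key, word] at e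
  · simp [key, word] at e
  · rw [word_injective e]

open Classical in
/-- The color between a type and a point `y`: the prescribed one, or else the default `r`. -/
noncomputable def prescribed {X : Type} (r : ℕ) (l : List (Letter X)) (y : X) : ℕ :=
  if h : ∃ q, (some y, q) ∈ l then h.choose else r

section
variable {X : Type} {Q : Set ℕ} {S : ColOrd X} {r : ℕ} {l : List (Letter X)}

theorem prescribed_of_mem (hl : Valid Q S l) {y : X} {q : ℕ} (h : (some y, q) ∈ l) :
    prescribed r l y = q := by
  have h' : ∃ q, (some y, q) ∈ l := ⟨q, h⟩
  rw [prescribed, dif_pos h']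
  exact hl.2.1 _ _ _ h'.choose_spec h

theorem prescribed_of_not {y : X} (h : ∀ q, (some y, q) ∉ l) : prescribed r l y = r := by
  rw [prescribed, dif_neg]
  rintro ⟨q, hq⟩
  exact h q hq

theorem prescribed_cases (hl : Valid Q S l) (r : ℕ) (y : X) :
    (prescribed r l y ∈ Q ∧ (some y, prescribed r l y) ∈ l) ∨ prescribed r l y = r := by
  by_cases h : ∃ q, (some y, q) ∈ l
  · obtain ⟨q, hq⟩ := h
    rw [prescribed_of_mem hl hq]
    exact Or.inl ⟨hl.1 _ _ hq, hq⟩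
  · exact Or.inr (prescribed_of_not (by simpa using h))

end

/-- The coloring of `K(x)`. The sequence `ρ` is meant to enumerate colors outside `Q`. -/
noncomputable def col {X : Type} {Q : Set ℕ} (ρ : ℕ → ℕ) (S : ColOrd X) :
    Car Q S → Car Q S → ℕ
  | .inl a, .inl b => S.c a b
  | .inl a, .inr t => prescribed (ρ 0) t.1.2 a
  | .inr t, .inl a => prescribed (ρ 0) t.1.2 a
  | .inr t, .inr s => ρ (wordDist (optDist S) (word t) (word s) + 1)

/-- The colored order `K(x)`. -/
noncomputable def str {X : Type} (Q : Set ℕ) (ρ : ℕ → ℕ) (S : ColOrd X) (hg : S.Good) :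
    ColOrd (Car Q S) where
  lt a b := List.Lex (letterLt S) (key a) (key b)
  c := col ρ S
  lt_irrefl a := lex_irrefl S _
  lt_trans _ _ _ h1 h2 := lex_trans S h1 h2
  lt_total a b h := lex_total S _ _ fun e => h (key_injective e)
  c_symm a b h := by
    rcases a with a | a <;> rcases b with b | b
    · exact S.c_symm a b fun e => h (by rw [e])
    · rfl
    · rfl
    · simp only [col, (rainbow_wordDist (rainbow_optDist S hg)).symm (word a)]

/-- No monochromatic triangle has exactly one vertex among the types. -/
theorem no_tri_one {X : Type} {Q : Set ℕ} {ρ : ℕ → ℕ} (hρQ : ∀ n, ρ n ∉ Q) {S : ColOrd X}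
    (hq : QCol Q S) (t : Typ Q S) (a b : X) (hab : a ≠ b)
    (h1 : S.c a b = prescribed (ρ 0) t.1.2 a) (h2 : S.c a b = prescribed (ρ 0) t.1.2 b) :
    False := by
  have hc := hq a b hab
  rcases prescribed_cases t.2 (ρ 0) a with ⟨_, ha⟩ | ha
  · rcases prescribed_cases t.2 (ρ 0) b with ⟨_, hb⟩ | hb
    · rw [← h1] at ha
      rw [← h2] at hb
      exact t.2.2.2 a b _ hab ha hb rfl
    · exact hρQ 0 (by rwa [← hb, ← h2])
  · exact hρQ 0 (by rwa [← ha, ← h1])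

/-- A type and a point of `X` never get a color used between two types, so no monochromatic
triangle has exactly two vertices among the types. -/
theorem no_tri_two {X : Type} {Q : Set ℕ} {ρ : ℕ → ℕ} (hρ : Function.Injective ρ)
    (hρQ : ∀ n, ρ n ∉ Q) {S : ColOrd X} (t : Typ Q S) (n : ℕ) (a : X)
    (h : prescribed (ρ 0) t.1.2 a = ρ (n + 1)) : False := by
  rcases prescribed_cases t.2 (ρ 0) a with ⟨ha, _⟩ | ha
  · exact hρQ (n + 1) (by rwa [← h])
  · have := hρ (ha.symm.trans h)
    omega

theorem str_good {X : Type} {Q : Set ℕ} {ρ : ℕ → ℕ} (hρ : Function.Injective ρ)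
    (hρQ : ∀ n, ρ n ∉ Q) (S : ColOrd X) (hq : QCol Q S) (hg : S.Good) :
    (str Q ρ S hg).Good := by
  rintro ⟨a, b, d, hab, hbd, had, h1, h2⟩
  rcases a with a | a <;> rcases b with b | b <;> rcases d with d | d <;>
    simp only [str, col] at h1 h2
  · exact hg ⟨a, b, d, by simpa using hab, by simpa using hbd, by simpa using had, h1, h2⟩
  · exact no_tri_one hρQ hq d a b (by simpa using hab) h2 h1
  · exact no_tri_one hρQ hq b a d (by simpa using had) h2.symm (by rw [← h2, h1])
  · exact no_tri_two hρ hρQ b _ a h1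
  · exact no_tri_one hρQ hq a b d (by simpa using hbd) h1.symm (by rw [← h1, h2])
  · exact no_tri_two hρ hρQ a _ b h2
  · exact no_tri_two hρ hρQ a _ d h2.symm
  · have h := (rainbow_wordDist (rainbow_optDist S hg)).eq (word a) (word b) (word d)
      (by have := hρ h1; omega) (by have := hρ h2; omega)
    exact hab (by rw [word_injective h.1])

/-! ### Functoriality -/

section
variable {X Y Z : Type} {Q : Set ℕ}

/-- Action of a map on letters. -/
def letterMap (f : X → Y) : Letter X → Letter Y := Prod.map (Option.map f) id

theorem mem_map_letter {f : X → Y} {l : List (Letter X)} {b : Y} {q : ℕ}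
    (h : (some b, q) ∈ l.map (letterMap f)) : ∃ a, f a = b ∧ (some a, q) ∈ l := by
  obtain ⟨⟨a, q'⟩, ha, e⟩ := List.mem_map.1 h
  simp only [letterMap, Prod.map_apply, id_eq, Prod.mk.injEq, Option.map_eq_some_iff] at e
  obtain ⟨⟨a, rfl, hab⟩, rfl⟩ := e
  exact ⟨a, hab, ha⟩

theorem map_letter_mem (f : X → Y) {l : List (Letter X)} {a : X} {q : ℕ}
    (h : (some a, q) ∈ l) : (some (f a), q) ∈ l.map (letterMap f) :=
  List.mem_map.2 ⟨_, h, rfl⟩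

variable {S : ColOrd X} {T : ColOrd Y} {f : X → Y}

theorem Valid.map (hf : IsEmb S T f) {l : List (Letter X)} (hl : Valid Q S l) :
    Valid Q T (l.map (letterMap f)) := by
  refine ⟨fun b q h => ?_, fun b q r h1 h2 => ?_, fun b b' q hb h1 h2 => ?_⟩
  · obtain ⟨a, -, ha⟩ := mem_map_letter h
    exact hl.1 _ _ ha
  · obtain ⟨a, rfl, ha⟩ := mem_map_letter h1
    obtain ⟨a', e, ha'⟩ := mem_map_letter h2
    rw [hf.1 e] at ha'
    exact hl.2.1 _ _ _ ha ha'
  · obtain ⟨a, rfl, ha⟩ := mem_map_letter h1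
    obtain ⟨a', rfl, ha'⟩ := mem_map_letter h2
    have hne : a ≠ a' := fun e => hb (by rw [e])
    rw [hf.2.2 a a' hne]
    exact hl.2.2 _ _ _ hne ha ha'

/-- The map `K(f)`. -/
def kmap (Q : Set ℕ) (hf : IsEmb S T f) : Car Q S → Car Q T :=
  Sum.map f fun t => ⟨(t.1.1.map f, t.1.2.map (letterMap f)), t.2.map hf⟩

theorem key_kmap (hf : IsEmb S T f) (a : Car Q S) :
    key (kmap Q hf a) = (key a).map (letterMap f) := by
  rcases a with a | a <;> simp [key, kmap, word, letterMap]

theorem letterLt_map (hf : IsEmb S T f) {a b : Letter X} (h : letterLt S a b) :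
    letterLt T (letterMap f a) (letterMap f b) := by
  obtain ⟨a, m⟩ := a
  obtain ⟨b, n⟩ := b
  rcases h with h | ⟨h1, h2⟩
  · left
    rcases a with _ | a <;> rcases b with _ | b <;> simp_all [optLt, letterMap]
    exact (hf.2.1 _ _).1 h
  · right
    simp_all [letterMap]

theorem lex_map (hf : IsEmb S T f) {l m : List (Letter X)} (h : List.Lex (letterLt S) l m) :
    List.Lex (letterLt T) (l.map (letterMap f)) (m.map (letterMap f)) := by
  induction h with
  | nil => exact .nil
  | rel h => exact .rel (letterLt_map hf h)
  | cons _ ih => exact .cons ih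

theorem optDist_map (hf : IsEmb S T f) (a b : Option X) :
    optDist T (a.map f) (b.map f) = optDist S a b := by
  rcases a with _ | a <;> rcases b with _ | b <;> simp only [Option.map, optDist]
  by_cases h : a = b
  · simp [h]
  · rw [if_neg h, if_neg fun e => h (hf.1 e), hf.2.2 a b h]

theorem wordDist_map (hf : IsEmb S T f) (l m : List (Letter X)) :
    wordDist (optDist T) (l.map (letterMap f)) (m.map (letterMap f)) =
      wordDist (optDist S) l m := by
  induction l generalizing m with
  | nil => cases m <;> simp [wordDist]
  | cons a l ih =>
    cases m with
    | nil => simp [wordDist]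
    | cons b m =>
      simp only [List.map_cons, wordDist, ih]
      simp [letterMap, optDist_map hf]

theorem prescribed_map (hf : IsEmb S T f) {l : List (Letter X)} (hl : Valid Q S l) (r : ℕ)
    (y : X) : prescribed r (l.map (letterMap f)) (f y) = prescribed r l y := by
  by_cases h : ∃ q, (some y, q) ∈ l
  · obtain ⟨q, hq⟩ := h
    rw [prescribed_of_mem hl hq, prescribed_of_mem (hl.map hf) (map_letter_mem f hq)]
  · rw [prescribed_of_not (l := l) (by simpa using h), prescribed_of_not]
    intro q hq
    obtain ⟨a, e, ha⟩ := mem_map_letter hq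
    rw [hf.1 e] at ha
    exact h ⟨q, ha⟩

/-- By linearity, it suffices for an embedding to preserve `<` in one direction. -/
theorem isEmb_of_lt (hlt : ∀ a b, S.lt a b → T.lt (f a) (f b))
    (hc : ∀ a b, a ≠ b → T.c (f a) (f b) = S.c a b) : IsEmb S T f := by
  have hinj : Function.Injective f := by
    intro a b e
    by_contra hab
    rcases S.lt_total a b hab with h | h
    · exact T.lt_irrefl _ (e ▸ hlt _ _ h)
    · exact T.lt_irrefl _ (e ▸ hlt _ _ h)
  refine ⟨hinj, fun a b => ⟨hlt a b, fun h => ?_⟩, hc⟩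
  by_cases hab : a = b
  · subst hab
    exact absurd h (T.lt_irrefl _)
  · exact (S.lt_total a b hab).resolve_right
      fun h' => T.lt_irrefl _ (T.lt_trans h (hlt _ _ h'))

theorem kmap_emb (ρ : ℕ → ℕ) (hgS : S.Good) (hgT : T.Good) (hf : IsEmb S T f) :
    IsEmb (str Q ρ S hgS) (str Q ρ T hgT) (kmap Q hf) := by
  refine isEmb_of_lt (fun a b h => ?_) (fun a b hab => ?_)
  · simp only [str, key_kmap] at h ⊢
    exact lex_map hf h
  · rcases a with a | a <;> rcases b with b | b
    · exact hf.2.2 a b (by simpa using hab)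
    · exact prescribed_map hf b.2 _ _
    · exact prescribed_map hf a.2 _ _
    · have h := wordDist_map hf (word a) (word b)
      have ha := key_kmap (Q := Q) hf (.inr a)
      have hb := key_kmap (Q := Q) hf (.inr b)
      simp only [key, kmap, Sum.map_inr] at ha hb
      simp only [str, kmap, Sum.map_inr, col, ha, hb, h]

theorem letterMap_id : letterMap (id : X → X) = id := by
  funext ⟨a, q⟩
  simp [letterMap]

theorem letterMap_comp (f : X → Y) (g : Y → Z) :
    letterMap (g ∘ f) = letterMap g ∘ letterMap f := by
  funext ⟨a, q⟩
  simp [letterMap]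

theorem kmap_id (h : IsEmb S S id) : kmap Q h = id := by
  funext a
  rcases a with a | ⟨⟨u, l⟩, hl⟩ <;> simp [kmap, letterMap_id]

theorem kmap_comp {U : ColOrd Z} {g : Y → Z} (hf : IsEmb S T f) (hg : IsEmb T U g)
    (hgf : IsEmb S U (g ∘ f)) : kmap Q hgf = kmap Q hg ∘ kmap Q hf := by
  funext a
  rcases a with a | ⟨⟨u, l⟩, hl⟩ <;> simp [kmap, letterMap_comp]

end

/-! ### Realizing one-point extensions -/

section
variable {X : Type} {Q : Set ℕ} {S : ColOrd X}

theorem inl_emb (ρ : ℕ → ℕ) (hg : S.Good) : IsEmb S (str Q ρ S hg) (Sum.inl : X → Car Q S) :=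
  isEmb_of_lt (fun _ _ h => .rel (Or.inl h)) (fun _ _ _ => rfl)

/-- Every cut of a finite set `A` is the cut immediately above some element of `A ∪ {-∞}`. -/
theorem exists_cut [Finite X] (A : Set X) (B : ColOrd (Option A)) (hB : ExtendsOn S A B) :
    ∃ u : Option X, ∀ a : A, (B.lt (some a) none → optLt S (some a) u ∨ some (a : X) = u) ∧
      (B.lt none (some a) → optLt S u (some a)) := by
  by_cases hne : ∃ a : A, B.lt (some a) none
  · -- The greatest element of `A` below the new point.
    let R : A → A → Prop := fun a b => S.lt b a
    have : IsTrans A R := ⟨fun a b d h1 h2 => S.lt_trans h2 h1⟩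
    have : Std.Irrefl R := ⟨fun a h => S.lt_irrefl _ h⟩
    have wf : WellFounded R := Finite.wellFounded_of_trans_of_irrefl R
    obtain ⟨m, hm, hmax⟩ := wf.has_min {a : A | B.lt (some a) none} hne
    refine ⟨some m, fun a => ⟨fun h => ?_, fun h => ?_⟩⟩
    · by_cases e : (a : X) = m
      · exact Or.inr (by rw [e])
      · exact Or.inl ((S.lt_total _ _ e).resolve_right (hmax a h))
    · exact (hB.1 m a).1 (B.lt_trans hm h)
  · refine ⟨none, fun a => ⟨fun h => absurd ⟨a, h⟩ hne, fun _ => trivial⟩⟩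

theorem realizes {ρ : ℕ → ℕ} (hfin : Finite X) (hg : S.Good) (A : Set X)
    (B : ColOrd (Option A)) (hBg : B.Good) (hBq : QCol Q B) (hB : ExtendsOn S A B) :
    ∃ t : Car Q S, IsEmb B (str Q ρ S hg) (fun o => Option.elim o t (fun a => .inl a)) := by
  classical
  have : Fintype A := Fintype.ofFinite A
  obtain ⟨u, hu⟩ := exists_cut A B hB
  let l : List (Letter X) :=
    (Finset.univ : Finset A).toList.map fun a : A => (some (a : X), B.c (some a) none)
  have hmem : ∀ a : A, (some (a : X), B.c (some a) none) ∈ l := fun a =>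
    List.mem_map.2 ⟨a, by simp, rfl⟩
  have hmem' : ∀ x q, (some x, q) ∈ l → ∃ a : A, (a : X) = x ∧ B.c (some a) none = q := by
    intro x q h
    obtain ⟨a, -, e⟩ := List.mem_map.1 h
    simp only [Prod.mk.injEq, Option.some.injEq] at e
    exact ⟨a, e.1, e.2⟩
  have hl : Valid Q S l := by
    refine ⟨fun x q h => ?_, fun x q r h1 h2 => ?_, fun x y q hxy h1 h2 => ?_⟩
    · obtain ⟨a, rfl, rfl⟩ := hmem' _ _ h
      exact hBq _ _ (by simp)
    · obtain ⟨a, rfl, rfl⟩ := hmem' _ _ h1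
      obtain ⟨b, e, rfl⟩ := hmem' _ _ h2
      rw [Subtype.ext e]
    · obtain ⟨a, rfl, ha⟩ := hmem' _ _ h1
      obtain ⟨b, rfl, hb⟩ := hmem' _ _ h2
      intro e
      have hab : (some a : Option A) ≠ some b := fun h => hxy (by rw [Option.some.inj h])
      have hc := hB.2 a b hxy
      exact hBg ⟨some a, some b, none, hab, by simp, by simp,
        by rw [hc, e, hb], by rw [hc, e, ha]⟩
  refine ⟨.inr ⟨(u, l), hl⟩, isEmb_of_lt ?_ ?_⟩
  · rintro (_ | a) (_ | b) h
    · exact absurd h (B.lt_irrefl _)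
    · exact .rel (Or.inl ((hu b).2 h))
    · rcases (hu a).1 h with h | h
      · exact .rel (Or.inl h)
      · exact .rel (Or.inr ⟨h, Nat.zero_lt_one⟩)
    · exact .rel (Or.inl ((hB.1 a b).1 h))
  · rintro (_ | a) (_ | b) h
    · exact absurd rfl h
    · rw [B.c_symm _ _ h]
      exact prescribed_of_mem hl (hmem b)
    · exact prescribed_of_mem hl (hmem a)
    · exact (hB.2 a b fun e => h (by rw [Subtype.ext e])).symm

end

end Kat

/-- For every infinite `Q ⊆ ℕ` with infinite complement there exists
a color-enlarging Katětov assignment from `Q` to `ℕ`. -/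
theorem exists_color_katetov (Q : Set ℕ) (hQ : Q.Infinite) (hQc : Qᶜ.Infinite) :
    Nonempty (ColorKatetov Q) := by
  let ρ : ℕ → ℕ := fun n => hQc.natEmbedding _ n
  have hρ : Function.Injective ρ := fun a b h =>
    (hQc.natEmbedding _).injective (Subtype.ext h)
  have hρQ : ∀ n, ρ n ∉ Q := fun n => (hQc.natEmbedding _ n).2
  exact ⟨{
    Carrier := fun _ S _ _ _ => Kat.Car Q S
    str := fun _ S _ _ hg => Kat.str Q ρ S hg
    countable := fun X S hf hq hg => by
      have : Countable X := Finite.to_countable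
      infer_instance
    good := fun _ S _ hq hg => Kat.str_good hρ hρQ S hq hg
    eta := fun _ _ _ _ _ => Sum.inl
    eta_emb := fun _ _ _ _ hg => Kat.inl_emb ρ hg
    map := fun _ _ _ _ _ _ _ _ _ _ _ hf => Kat.kmap Q hf
    map_emb := fun _ _ _ _ _ _ hgX _ _ hgY _ hf => Kat.kmap_emb ρ hgX hgY hf
    map_id := fun _ _ _ _ _ h => Kat.kmap_id h
    map_comp := fun _ _ _ _ _ _ _ _ _ _ _ _ _ _ _ _ _ hf hg hgf => Kat.kmap_comp hf hg hgf
    naturality := fun _ _ _ _ _ _ _ _ _ _ _ _ => rfl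
    realizes := fun _ _ hf _ hg A B hBg hBq hB => Kat.realizes hf hg A B hBg hBq hB }⟩
end
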